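/- arXiv:0905.2690 — 7 statements merged into one kernel-verified Lean document; each statement's English description precedes it below -/
import Mathlib

section
/- Let n > 0 and let a, b, c, d be real numbers with a² + b² − c² − d² = n², a·c + b·d = 0, and (c,d) ≠ (0,0). Let [[x_u, x_v],[y_u, y_v]] be the inverse of the matrix [[a, b],[c, d]] (which is invertible). Set E = n²(x_u² + y_u²), F = n²(x_u·x_v + y_u·y_v), G = n²(x_v² + y_v²). Then 1/E − 1/G = 1 and F = 0. -/
/-!
Write `M` for the Jacobian and `N` for its inverse. The matrix of inner products of the
columns of `N` is `NᵀN = (M Mᵀ)⁻¹`, and `M Mᵀ = diag(p, q)` with `p = a² + b²`,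
`q = c² + d²`, because `a c + b d = 0`. Hence `F = 0`, `E = n² / p`, `G = n² / q`, and
`1/E - 1/G = (p - q) / n² = 1`.
-/

/-- First fundamental form of the travel-time metric in hodograph coordinates:
for a pointwise elliptic solution of the eikonal system (`a² + b² − c² − d² = n²`,
`a·c + b·d = 0`, `(c,d) ≠ (0,0)`), if `[[xu,xv],[yu,yv]]` is the inverse of the
Jacobian `[[a,b],[c,d]]`, and `E = n²(xu² + yu²)`, `F = n²(xu·xv + yu·yv)`,
`G = n²(xv² + yv²)`, then `1/E − 1/G = 1` and `F = 0`. -/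
theorem stmt3 (n a b c d xu xv yu yv : ℝ) (hn : 0 < n)
    (h1 : a ^ 2 + b ^ 2 - c ^ 2 - d ^ 2 = n ^ 2)
    (h2 : a * c + b * d = 0)
    (hcd : (c, d) ≠ (0, 0))
    (hinv : (!![a, b; c, d] : Matrix (Fin 2) (Fin 2) ℝ) * !![xu, xv; yu, yv] = 1 ∧
      (!![xu, xv; yu, yv] : Matrix (Fin 2) (Fin 2) ℝ) * !![a, b; c, d] = 1) :
    1 / (n ^ 2 * (xu ^ 2 + yu ^ 2)) - 1 / (n ^ 2 * (xv ^ 2 + yv ^ 2)) = 1 ∧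
    n ^ 2 * (xu * xv + yu * yv) = 0 := by
  obtain ⟨hMN, hNM⟩ := hinv
  have e00 := congrFun₂ hMN 0 0
  have e01 := congrFun₂ hMN 0 1
  have e11 := congrFun₂ hMN 1 1
  have f00 := congrFun₂ hNM 0 0
  have f01 := congrFun₂ hNM 0 1
  have f10 := congrFun₂ hNM 1 0
  have f11 := congrFun₂ hNM 1 1
  simp [Matrix.mul_apply, Fin.sum_univ_two] at e00 e01 e11 f00 f01 f10 f11
  -- Since the rows of the Jacobian are orthogonal, the columns of its inverse are
  -- these rows divided by their squared lengths.
  have hxu : xu * (a ^ 2 + b ^ 2) = a := by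
    linear_combination a * f00 + b * f01 - xv * h2
  have hyu : yu * (a ^ 2 + b ^ 2) = b := by
    linear_combination a * f10 + b * f11 - yv * h2
  have hxv : xv * (c ^ 2 + d ^ 2) = c := by
    linear_combination c * f00 + d * f01 - xu * h2
  have hyv : yv * (c ^ 2 + d ^ 2) = d := by
    linear_combination c * f10 + d * f11 - yu * h2
  have hE : (xu ^ 2 + yu ^ 2) * (a ^ 2 + b ^ 2) = 1 := by
    linear_combination xu * hxu + yu * hyu + e00
  have hG : (xv ^ 2 + yv ^ 2) * (c ^ 2 + d ^ 2) = 1 := by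
    linear_combination xv * hxv + yv * hyv + e11
  have hF : (xu * xv + yu * yv) * (a ^ 2 + b ^ 2) = 0 := by
    linear_combination xv * hxu + yv * hyu + e01
  have hp : a ^ 2 + b ^ 2 ≠ 0 := right_ne_zero_of_mul_eq_one hE
  have hn2 : n ^ 2 ≠ 0 := by positivity
  refine ⟨?_, by rw [(mul_eq_zero.mp hF).resolve_right hp, mul_zero]⟩
  rw [eq_inv_of_mul_eq_one_left hE, eq_inv_of_mul_eq_one_left hG, ← div_eq_mul_inv,
    ← div_eq_mul_inv, one_div_div, one_div_div, ← sub_div, div_eq_one_iff_eq hn2]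
  linear_combination h1
end

section
/- Let n > 0 and let a, b, c, d be real numbers with a² + b² − c² − d² = n², a·c + b·d = 0, and (c,d) ≠ (0,0). Let [[x_u, x_v],[y_u, y_v]] be the inverse of [[a, b],[c, d]]. Then there exists a unique real number f such that: x_u = f·y_v, y_u = −f·x_v, sgn f = sgn(x_u·y_v − x_v·y_u), f² = 1 − n²(x_u² + y_u²), and 1/f² = 1 + n²(x_v² + y_v²); in particular 0 < f² < 1. -/
/-!
Let `P = a² + b²`, which is positive since `P = n² + c² + d²`. As `(c, d)` is orthogonal to
`(a, b) ≠ 0` in the plane, it is a multiple of the rotated vector: `(c, d) = f • (-b, a)`, with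
`f = (a d - b c) / P`. Then `f ≠ 0`, the first eikonal equation reads `P (1 - f²) = n²`, and the
inverse matrix is `[[a / P, -b / (f P)], [b / P, a / (f P)]]`. All the claimed relations are read
off from this form. Uniqueness holds because `(x_v, y_v) ≠ 0`.
-/

/-- Existence and uniqueness of the Bäcklund factor in hodograph variables:
under the pointwise eikonal relations, if `[[xu,xv],[yu,yv]]` is the inverse of
`[[a,b],[c,d]]`, then there is a unique real `f` with `xu = f·yv`, `yu = −f·xv`,
`sgn f = sgn(xu·yv − xv·yu)`, `f² = 1 − n²(xu² + yu²)`,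
`1/f² = 1 + n²(xv² + yv²)`, and in particular `0 < f² < 1`. -/
theorem stmt4 (n a b c d xu xv yu yv : ℝ) (hn : 0 < n)
    (h1 : a ^ 2 + b ^ 2 - c ^ 2 - d ^ 2 = n ^ 2)
    (h2 : a * c + b * d = 0)
    (hcd : (c, d) ≠ (0, 0))
    (hinv : (!![a, b; c, d] : Matrix (Fin 2) (Fin 2) ℝ) * !![xu, xv; yu, yv] = 1 ∧
      (!![xu, xv; yu, yv] : Matrix (Fin 2) (Fin 2) ℝ) * !![a, b; c, d] = 1) :
    ∃! f : ℝ, xu = f * yv ∧ yu = -f * xv ∧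
      Real.sign f = Real.sign (xu * yv - xv * yu) ∧
      f ^ 2 = 1 - n ^ 2 * (xu ^ 2 + yu ^ 2) ∧
      1 / f ^ 2 = 1 + n ^ 2 * (xv ^ 2 + yv ^ 2) ∧
      0 < f ^ 2 ∧ f ^ 2 < 1 := by
  have hn2 : 0 < n ^ 2 := by positivity
  have hP : 0 < a ^ 2 + b ^ 2 := by nlinarith [sq_nonneg c, sq_nonneg d]
  obtain ⟨f, hf⟩ : ∃ f, f = (a * d - b * c) / (a ^ 2 + b ^ 2) := ⟨_, rfl⟩
  have hc : c = -f * b := by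
    rw [hf]; field_simp; linear_combination a * h2
  have hd : d = f * a := by
    rw [hf]; field_simp; linear_combination b * h2
  have hf0 : f ≠ 0 := by
    rintro rfl
    exact hcd (by simp [hc, hd])
  have hf2 : 0 < f ^ 2 := by positivity
  clear hf hcd
  subst hc hd
  have hn' : n ^ 2 = (a ^ 2 + b ^ 2) * (1 - f ^ 2) := by linear_combination -h1
  have hlt : f ^ 2 < 1 := by
    rw [hn'] at hn2
    linarith [(pos_iff_pos_of_mul_pos hn2).mp hP]
  have hm := hinv.1
  rw [Matrix.mul_fin_two, Matrix.one_fin_two] at hm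
  simp only [EmbeddingLike.apply_eq_iff_eq, Matrix.vecCons_inj, and_true] at hm
  obtain ⟨⟨e1, e2⟩, e3, e4⟩ := hm
  have e3' : -b * xu + a * yu = 0 := by
    apply mul_left_cancel₀ hf0; linear_combination e3
  have hxu : xu = a / (a ^ 2 + b ^ 2) := by
    field_simp; linear_combination a * e1 - b * e3'
  have hyu : yu = b / (a ^ 2 + b ^ 2) := by
    field_simp; linear_combination b * e1 + a * e3'
  have hxv : xv = -b / (f * (a ^ 2 + b ^ 2)) := by
    field_simp; linear_combination a * f * e2 - b * e4
  have hyv : yv = a / (f * (a ^ 2 + b ^ 2)) := by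
    field_simp; linear_combination b * f * e2 + a * e4
  have r1 : xu = f * yv := by rw [hxu, hyv]; field_simp
  have r2 : yu = -f * xv := by rw [hyu, hxv]; field_simp
  have hq : xv ^ 2 + yv ^ 2 = 1 / (f ^ 2 * (a ^ 2 + b ^ 2)) := by
    rw [hxv, hyv]; field_simp; ring
  have hqpos : 0 < xv ^ 2 + yv ^ 2 := by rw [hq]; positivity
  refine ⟨f, ⟨r1, r2, ?_, ?_, ?_, hf2, hlt⟩, ?_⟩
  · -- The Jacobian determinant is `f` times the positive number `xv² + yv²`.
    have hJ : xu * yv - xv * yu = f * (xv ^ 2 + yv ^ 2) := by rw [r1, r2]; ring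
    rw [hJ]
    rcases lt_or_gt_of_ne hf0 with h | h
    · rw [Real.sign_of_neg h, Real.sign_of_neg (mul_neg_of_neg_of_pos h hqpos)]
    · rw [Real.sign_of_pos h, Real.sign_of_pos (mul_pos h hqpos)]
  · rw [hn', hxu, hyu]; field_simp; ring
  · rw [hn', hq]; field_simp; ring
  · rintro g ⟨g1, g2, -⟩
    apply mul_right_cancel₀ hqpos.ne'
    linear_combination yv * (r1 - g1) - xv * (r2 - g2)
end

section
/- Let n > 0 and let a, b, c, d be real numbers with a² + b² − c² − d² = n², a·c + b·d = 0, and (c,d) ≠ (0,0). Let [[x_u, x_v],[y_u, y_v]] be the inverse of [[a, b],[c, d]], and let f be the unique real number with x_u = f·y_v, y_u = −f·x_v and sgn f = sgn(x_u·y_v − x_v·y_u). Then f² = (1 − n²·x_u²)/(1 + n²·x_v²) and f² = (1 − n²·y_u²)/(1 + n²·y_v²). -/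
/-! With `q = xv² + yv²`, the relations `xu = f·yv`, `yu = -f·xv` turn both claims into
`f² (1 + n² q) = 1`. Lagrange's identity applied to the entries of the inverse relation gives
`(a² + b²) f² q = 1` and `(c² + d²) q = 1` (the cross terms `a·yu - b·xu` and `c·yv - d·xv`
vanish by the off-diagonal entries), and `n² = (a² + b²) - (c² + d²)` combines the two. -/

/-- Further identities for the Bäcklund factor in hodograph variables: with
`[[xu,xv],[yu,yv]]` the inverse of `[[a,b],[c,d]]` and `f` the Bäcklund factor
(`xu = f·yv`, `yu = −f·xv`, `sgn f = sgn(xu·yv − xv·yu)`), one has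
`f² = (1 − n²·xu²)/(1 + n²·xv²)` and `f² = (1 − n²·yu²)/(1 + n²·yv²)`. -/
theorem stmt5 (n a b c d xu xv yu yv f : ℝ) (hn : 0 < n)
    (h1 : a ^ 2 + b ^ 2 - c ^ 2 - d ^ 2 = n ^ 2)
    (h2 : a * c + b * d = 0)
    (hcd : (c, d) ≠ (0, 0))
    (hinv : (!![a, b; c, d] : Matrix (Fin 2) (Fin 2) ℝ) * !![xu, xv; yu, yv] = 1 ∧
      (!![xu, xv; yu, yv] : Matrix (Fin 2) (Fin 2) ℝ) * !![a, b; c, d] = 1)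
    (hf1 : xu = f * yv) (hf2 : yu = -f * xv)
    (hf3 : Real.sign f = Real.sign (xu * yv - xv * yu)) :
    f ^ 2 = (1 - n ^ 2 * xu ^ 2) / (1 + n ^ 2 * xv ^ 2) ∧
    f ^ 2 = (1 - n ^ 2 * yu ^ 2) / (1 + n ^ 2 * yv ^ 2) := by
  have e := hinv.1
  simp only [← Matrix.ext_iff, Fin.forall_fin_two, Matrix.mul_apply, Fin.sum_univ_two,
    Matrix.one_apply] at e
  simp at e
  obtain ⟨⟨e1, e2⟩, e3, e4⟩ := e
  have hf : f ≠ 0 := by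
    rintro rfl
    simp at hf1 hf2
    simp [hf1, hf2] at e1
  subst hf1 hf2
  have e5 : c * yv - d * xv = 0 := by
    apply mul_left_cancel₀ hf
    linear_combination e3
  have p1 : (a ^ 2 + b ^ 2) * (f ^ 2 * (xv ^ 2 + yv ^ 2)) = 1 := by
    linear_combination (a * (f * yv) + b * (-f * xv) + 1) * e1 + f ^ 2 * (a * xv + b * yv) * e2
  have p2 : (c ^ 2 + d ^ 2) * (xv ^ 2 + yv ^ 2) = 1 := by
    linear_combination (c * xv + d * yv + 1) * e4 + (c * yv - d * xv) * e5
  have key : f ^ 2 * (1 + n ^ 2 * (xv ^ 2 + yv ^ 2)) = 1 := by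
    linear_combination p1 - f ^ 2 * p2 - f ^ 2 * (xv ^ 2 + yv ^ 2) * h1
  constructor
  · rw [eq_div_iff (by positivity)]
    linear_combination key
  · rw [eq_div_iff (by positivity)]
    linear_combination key
end

section
/- Let a < b, let N ≥ 3 be an integer, let x_k = a + (k−1)(b−a)/(N−1) for k = 1,…,N, let λ, μ > 0, let g₁,…,g_N be real numbers, and define J(φ) = Σ_{k=1}^N (φ(x_k) − g_k)² + λ·∫_ℝ [ μ⁷ (φ'''')² + μ^{-1} φ² ] dx over the class A of four times continuously differentiable functions φ : ℝ → ℝ whose derivatives of order 0 through 4 are square-integrable on ℝ. Let u ∈ A satisfy J(u) ≤ J(φ) for every φ ∈ A. Let f ∈ A, ε > 0, E > 0 satisfy |f(x_k) − g_k| ≤ ε for all k and μ^{-4}∫_ℝ f² dx + μ⁴∫_ℝ (f'''')² dx ≤ 2(b−a)^{-3} E², and set δ = max{ (1 − 1/N)^{-1/2}·ε/E, (N−1)^{-2} }. Then for every 0 < c₁ ≤ c₂ there exist constants C > 0 and δ₀ > 0 (depending only on c₁ and c₂) such that whenever c₁ ≤ (λ/N)·(μ/(b−a))³·(E/ε)²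 ≤ c₂ and δ ≤ δ₀, one has max_{a ≤ x ≤ b} |f(x) − u(x)| ≤ C·E·δ^{3/4} and max_{a ≤ x ≤ b} |f'(x) − u'(x)| ≤ C·E·(b−a)^{-1}·δ^{1/4}. -/
/-! The error `v = f - u` is controlled by two consequences of `J u ≤ J f`. Comparing the sampling
terms, `∑ v(x_k)² ≲ N ε²`. Comparing the penalties, `μ⁻⁴ ∫ v² + μ⁴ ∫ (v'''')² ≲ E² (b-a)⁻³`, and
since two integrations by parts give `∫ (v'')² = ∫ v v''''`, the inequality of arithmetic and
geometric means yields `∫ (v'')² ≲ E² (b-a)⁻³` with a constant that does not see `μ`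
(`integral_sq_iteratedDeriv_two_le`).

The rest is local. Write `δ = d⁴`. Around any `x ∈ [a, b]` there is a block of consecutive nodes of
length comparable to `d² (b-a)`; this is at least one mesh width because `(N-1)⁻² ≤ δ`. Each end of
the block has about `d² N` nodes, so by averaging each contains a node at which `|v| ≲ E d³`
(`exists_small_node`). The mean value theorem between these two nodes gives a point of the block
where `|v'| ≲ E d / (b-a)`. The energy bound on `v''` limits the oscillation of `v'` on the block by
the same amount (`abs_sub_le_of_energy`), so `|v'| ≲ E d / (b-a)` on the whole block, and
integrating from one of the nodes gives `|v| ≲ E d³` (`local_bounds`). -/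

open MeasureTheory Set

/-- The admissible class of Appendix C: four times continuously differentiable
functions whose derivatives of order `0` through `4` are square-integrable
(a `W^{4,2}(ℝ)`-type class). -/
def inW42 (φ : ℝ → ℝ) : Prop :=
  ContDiff ℝ 4 φ ∧ ∀ i ≤ 4, Integrable (fun x : ℝ => (iteratedDeriv i φ x) ^ 2)

/-- The penalized least-squares (Tikhonov) functional of Appendix C. -/
noncomputable def Jfun (N : ℕ) (xs g : ℕ → ℝ) (lam μ : ℝ) (φ : ℝ → ℝ) : ℝ :=
  (∑ k ∈ Finset.range N, (φ (xs k) - g k) ^ 2)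
    + lam * ∫ x : ℝ, (μ ^ 7 * (iteratedDeriv 4 φ x) ^ 2 + μ⁻¹ * (φ x) ^ 2)

/-! ### Square-integrable derivatives and interpolation -/

lemma inW42.hasDerivAt {φ : ℝ → ℝ} (h : inW42 φ) {i : ℕ} (hi : i < 4) (x : ℝ) :
    HasDerivAt (iteratedDeriv i φ) (iteratedDeriv (i + 1) φ x) x := by
  rw [iteratedDeriv_succ]
  exact ((h.1.differentiable_iteratedDeriv i (by exact_mod_cast hi)) x).hasDerivAt

lemma inW42.continuous {φ : ℝ → ℝ} (h : inW42 φ) {i : ℕ} (hi : i ≤ 4) :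
    Continuous (iteratedDeriv i φ) :=
  h.1.continuous_iteratedDeriv i (by exact_mod_cast hi)

lemma inW42.iteratedDeriv_sub {f u : ℝ → ℝ} (hf : inW42 f) (hu : inW42 u) {i : ℕ} (hi : i ≤ 4)
    (x : ℝ) : iteratedDeriv i (f - u) x = iteratedDeriv i f x - iteratedDeriv i u x :=
  _root_.iteratedDeriv_sub (hf.1.of_le (by exact_mod_cast hi)).contDiffAt
    (hu.1.of_le (by exact_mod_cast hi)).contDiffAt

/-- The product of two continuous square-integrable functions is integrable. -/
lemma integrable_mul_of_sq {p q : ℝ → ℝ} (hp : Continuous p) (hq : Continuous q)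
    (hp2 : Integrable (fun x => p x ^ 2)) (hq2 : Integrable (fun x => q x ^ 2)) :
    Integrable (fun x => p x * q x) := by
  refine (hp2.add hq2).mono' (hp.mul hq).aestronglyMeasurable (Filter.Eventually.of_forall ?_)
  intro x
  simp only [Pi.add_apply, Real.norm_eq_abs]
  rw [abs_le]
  constructor <;> nlinarith [sq_nonneg (p x - q x), sq_nonneg (p x + q x)]

lemma inW42.sub {f u : ℝ → ℝ} (hf : inW42 f) (hu : inW42 u) : inW42 (f - u) := by
  refine ⟨hf.1.sub hu.1, fun i hi => ?_⟩
  have h := ((hf.2 i hi).add (hu.2 i hi)).sub ((integrable_mul_of_sq (hf.continuous hi)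
    (hu.continuous hi) (hf.2 i hi) (hu.2 i hi)).const_mul 2)
  refine h.congr (Filter.Eventually.of_forall fun x => ?_)
  simp only [Pi.add_apply, Pi.sub_apply, hf.iteratedDeriv_sub hu hi]
  ring

lemma inW42.integral_sub_sq_le {f u : ℝ → ℝ} (hf : inW42 f) (hu : inW42 u) {i : ℕ} (hi : i ≤ 4) :
    ∫ x, iteratedDeriv i (f - u) x ^ 2 ≤
      2 * (∫ x, iteratedDeriv i f x ^ 2) + 2 * ∫ x, iteratedDeriv i u x ^ 2 := by
  rw [← integral_const_mul, ← integral_const_mul,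
    ← integral_add ((hf.2 i hi).const_mul 2) ((hu.2 i hi).const_mul 2)]
  refine integral_mono ((hf.sub hu).2 i hi)
    (((hf.2 i hi).const_mul 2).add ((hu.2 i hi).const_mul 2)) fun x => ?_
  simp only [hf.iteratedDeriv_sub hu hi]
  nlinarith [sq_nonneg (iteratedDeriv i f x + iteratedDeriv i u x)]

lemma inW42.integral_by_parts {φ : ℝ → ℝ} (h : inW42 φ) {i j : ℕ} (hi : i < 4) (hj : j < 4) :
    ∫ x, iteratedDeriv i φ x * iteratedDeriv (j + 1) φ x =
      - ∫ x, iteratedDeriv (i + 1) φ x * iteratedDeriv j φ x := by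
  have key : ∀ {i j : ℕ}, i ≤ 4 → j ≤ 4 →
      Integrable (iteratedDeriv i φ * iteratedDeriv j φ) := fun hi hj =>
    integrable_mul_of_sq (h.continuous hi) (h.continuous hj) (h.2 _ hi) (h.2 _ hj)
  exact integral_mul_deriv_eq_deriv_mul_of_integrable (fun x _ => h.hasDerivAt hi x)
    (fun x _ => h.hasDerivAt hj x) (key hi.le hj) (key hi hj.le) (key hi.le hj.le)

/-- Scale-free interpolation: the middle derivative is bounded by the penalty, uniformly in the
weight `m` (which is `μ ^ 4` in the application). -/
lemma integral_sq_iteratedDeriv_two_le {φ : ℝ → ℝ} (h : inW42 φ) {m : ℝ} (hm : 0 < m) :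
    2 * ∫ x, iteratedDeriv 2 φ x ^ 2 ≤
      m⁻¹ * (∫ x, iteratedDeriv 0 φ x ^ 2) + m * ∫ x, iteratedDeriv 4 φ x ^ 2 := by
  have h1 : ∫ x, iteratedDeriv 2 φ x ^ 2 = ∫ x, iteratedDeriv 0 φ x * iteratedDeriv 4 φ x := by
    have e1 := h.integral_by_parts (i := 0) (j := 3) (by norm_num) (by norm_num)
    have e2 := h.integral_by_parts (i := 1) (j := 2) (by norm_num) (by norm_num)
    simp only [zero_add, Nat.reduceAdd] at e1 e2
    rw [e1, e2, neg_neg]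
    simp only [sq]
  rw [h1, ← integral_const_mul, ← integral_const_mul, ← integral_const_mul,
    ← integral_add ((h.2 0 (by norm_num)).const_mul _) ((h.2 4 le_rfl).const_mul _)]
  refine integral_mono ((integrable_mul_of_sq (h.continuous (by norm_num)) (h.continuous le_rfl)
    (h.2 0 (by norm_num)) (h.2 4 le_rfl)).const_mul 2)
    (((h.2 0 (by norm_num)).const_mul _).add ((h.2 4 le_rfl).const_mul _)) fun x => ?_
  have e : m⁻¹ * iteratedDeriv 0 φ x ^ 2 + m * iteratedDeriv 4 φ x ^ 2
      - 2 * (iteratedDeriv 0 φ x * iteratedDeriv 4 φ x)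
      = m⁻¹ * (iteratedDeriv 0 φ x - m * iteratedDeriv 4 φ x) ^ 2 := by
    field_simp
    ring
  have : 0 ≤ m⁻¹ * (iteratedDeriv 0 φ x - m * iteratedDeriv 4 φ x) ^ 2 := by positivity
  show 2 * (iteratedDeriv 0 φ x * iteratedDeriv 4 φ x) ≤
    m⁻¹ * iteratedDeriv 0 φ x ^ 2 + m * iteratedDeriv 4 φ x ^ 2
  linarith

/-! ### Pointwise bounds from nodal values and energy -/

/-- Oscillation of a function whose derivative has energy at most `K`. The free parameter `τ`
replaces the square root that the Cauchy-Schwarz inequality would produce. -/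
lemma abs_sub_le_of_energy {w w' : ℝ → ℝ} (hw : ∀ x, HasDerivAt w (w' x) x) (hc : Continuous w')
    (hint : Integrable (fun x => w' x ^ 2)) {K τ : ℝ} (hK : ∫ x, w' x ^ 2 ≤ K) (hτ : 0 < τ)
    (s t : ℝ) : |w t - w s| ≤ τ / 2 * K + |t - s| / (2 * τ) := by
  wlog hst : s ≤ t generalizing s t
  · rw [abs_sub_comm (w t), abs_sub_comm t]
    exact this t s (le_of_not_ge hst)
  rw [← intervalIntegral.integral_eq_sub_of_hasDerivAt (fun x _ => hw x)
    (hc.intervalIntegrable s t), abs_of_nonneg (sub_nonneg.2 hst)]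
  have hpt : ∀ x, |w' x| ≤ τ / 2 * w' x ^ 2 + 1 / (2 * τ) := fun x => by
    have e : τ / 2 * w' x ^ 2 + 1 / (2 * τ) - |w' x| = (τ * |w' x| - 1) ^ 2 / (2 * τ) := by
      rw [← sq_abs (w' x)]
      field_simp
      ring
    have : 0 ≤ (τ * |w' x| - 1) ^ 2 / (2 * τ) := by positivity
    linarith
  calc |∫ x in s..t, w' x| ≤ ∫ x in s..t, |w' x| := intervalIntegral.abs_integral_le_integral_abs hst
    _ ≤ ∫ x in s..t, (τ / 2 * w' x ^ 2 + 1 / (2 * τ)) :=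
        intervalIntegral.integral_mono_on hst (hc.abs.intervalIntegrable s t)
          ((by fun_prop : Continuous fun x => τ / 2 * w' x ^ 2 + 1 / (2 * τ)).intervalIntegrable s t)
          fun x _ => hpt x
    _ = τ / 2 * (∫ x in s..t, w' x ^ 2) + (t - s) / (2 * τ) := by
        rw [intervalIntegral.integral_add
          ((by fun_prop : Continuous fun x => τ / 2 * w' x ^ 2).intervalIntegrable s t)
          (by simp), intervalIntegral.integral_const_mul, intervalIntegral.integral_const]
        simp only [smul_eq_mul]
        ring
    _ ≤ τ / 2 * K + (t - s) / (2 * τ) := by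
        have : ∫ x in s..t, w' x ^ 2 ≤ K := by
          rw [intervalIntegral.integral_of_le hst]
          exact (setIntegral_le_integral hint
            (Filter.Eventually.of_forall fun x => sq_nonneg (w' x))).trans hK
        gcongr

/-- Among `m` consecutive indices below `N`, one carries at most the average of the total. -/
lemma exists_small_node {q : ℕ → ℝ} (hq : ∀ k, 0 ≤ q k) {N j m : ℕ} (hm : 0 < m)
    (hjm : j + m ≤ N) {T : ℝ} (hT : ∑ k ∈ Finset.range N, q k ≤ T) :
    ∃ k, j ≤ k ∧ k < j + m ∧ q k ≤ T / m := by
  have hs : ∑ k ∈ Finset.Ico j (j + m), q k ≤ ∑ _k ∈ Finset.Ico j (j + m), T / m := by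
    rw [Finset.sum_const, Nat.card_Ico, nsmul_eq_mul, Nat.add_sub_cancel_left,
      mul_div_cancel₀ _ (by positivity)]
    refine le_trans (Finset.sum_le_sum_of_subset_of_nonneg ?_ fun k _ _ => hq k) hT
    intro k hk
    simp only [Finset.mem_Ico, Finset.mem_range] at *
    omega
  obtain ⟨k, hk, hle⟩ := Finset.exists_le_of_sum_le ⟨j, by simp [hm]⟩ hs
  rw [Finset.mem_Ico] at hk
  exact ⟨k, hk.1, hk.2, hle⟩

/-- Every point of `[0, M]` lies in a block `[j, j + r]` of integers inside `[0, M]`. -/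
lemma exists_block {M r : ℕ} (hr : 0 < r) (hrM : r ≤ M) {y : ℝ} (hy0 : 0 ≤ y) (hyM : y ≤ M) :
    ∃ j : ℕ, j + r ≤ M ∧ (j : ℝ) ≤ y ∧ y ≤ j + r := by
  by_cases h : ⌊y⌋₊ + r ≤ M
  · refine ⟨⌊y⌋₊, h, Nat.floor_le hy0, ?_⟩
    have h1 := (Nat.lt_floor_add_one y).le
    have h2 : (1 : ℝ) ≤ r := by exact_mod_cast hr
    linarith
  · refine ⟨M - r, by omega, ?_, ?_⟩
    · have h1 := Nat.floor_le hy0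
      have h2 : ((M - r : ℕ) : ℝ) ≤ ⌊y⌋₊ := by exact_mod_cast (by omega : M - r ≤ ⌊y⌋₊)
      linarith
    · rw [Nat.cast_sub hrM]
      linarith

/-- The local argument, on an interval of length `L` with `M + 1` equidistant nodes and
`d = δ ^ (1/4)`: nodal smallness in mean square together with the energy bound for `v''` control
`v'` and `v` pointwise. -/
lemma local_bounds {v v' v'' : ℝ → ℝ} (hv : ∀ x, HasDerivAt v (v' x) x)
    (hv' : ∀ x, HasDerivAt v' (v'' x) x) (hc : Continuous v'')
    (hint : Integrable (fun x => v'' x ^ 2)) {a L E d A B : ℝ} {M : ℕ} (hM : 0 < M) (hL : 0 < L)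
    (hE : 0 < E) (hd : 0 < d) (hA : 0 ≤ A) (hB : 0 ≤ B)
    (hen : ∫ x, v'' x ^ 2 ≤ B * (E ^ 2 / L ^ 3))
    (hsum : ∑ k ∈ Finset.range (M + 1), v (a + k * L / M) ^ 2 ≤ A * M * (E * d ^ 4) ^ 2)
    (hmesh : 1 ≤ d ^ 2 * M) (hsmall : 6 * d ^ 2 ≤ 1) {x : ℝ} (hx : x ∈ Icc a (a + L)) :
    |v x| ≤ ((A + 1) + 6 * (2 * (A + 1) + B / 2 + 3)) * E * d ^ 3 ∧
    |v' x| ≤ (2 * (A + 1) + B / 2 + 3) * E * L⁻¹ * d := by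
  have hM' : (0 : ℝ) < M := by exact_mod_cast hM
  set m : ℕ := ⌈d ^ 2 * M⌉₊ with hmdef
  have hm1 : d ^ 2 * M ≤ m := Nat.le_ceil _
  have hm2 : (m : ℝ) ≤ 2 * (d ^ 2 * M) := by
    have := (Nat.ceil_lt_add_one (by positivity : 0 ≤ d ^ 2 * (M : ℝ))).le
    linarith
  have hm0 : 0 < m := Nat.ceil_pos.2 (by positivity)
  have hm0' : (0 : ℝ) < m := by exact_mod_cast hm0
  have h3m : 3 * m ≤ M := by
    have : (3 * m : ℝ) ≤ M := by nlinarith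
    exact_mod_cast this
  obtain ⟨j, hjM, hj1, hj2⟩ := exists_block (M := M) (r := 3 * m) (by omega) h3m
    (y := (x - a) / L * M) (mul_nonneg (div_nonneg (by linarith [hx.1]) hL.le) hM'.le)
    (mul_le_of_le_one_left hM'.le ((div_le_one hL).2 (by linarith [hx.2])))
  push_cast at hj2
  obtain ⟨k₁, hk₁, hk₁', hs₁⟩ := exists_small_node (q := fun k => v (a + k * L / M) ^ 2)
    (fun _ => sq_nonneg _) hm0 (show j + m ≤ M + 1 by omega) hsum
  obtain ⟨k₂, hk₂, hk₂', hs₂⟩ := exists_small_node (q := fun k => v (a + k * L / M) ^ 2)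
    (fun _ => sq_nonneg _) hm0 (show (j + 2 * m) + m ≤ M + 1 by omega) hsum
  -- `M / m ≤ d⁻²` turns the average into `A E² d⁶`
  have hval : ∀ z : ℝ, z ^ 2 ≤ A * M * (E * d ^ 4) ^ 2 / m → |z| ≤ (A + 1) * E * d ^ 3 := by
    intro z hz
    have h1 : A * M * (E * d ^ 4) ^ 2 / m ≤ A * (E * d ^ 3) ^ 2 := by
      rw [div_le_iff₀ hm0']
      have : A * (E * d ^ 3) ^ 2 * (d ^ 2 * M) ≤ A * (E * d ^ 3) ^ 2 * m := by gcongr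
      calc _ = A * (E * d ^ 3) ^ 2 * (d ^ 2 * M) := by ring
        _ ≤ _ := this
    refine abs_le_of_sq_le_sq ?_ (by positivity)
    have h2 : 0 < (E * d ^ 3) ^ 2 := by positivity
    nlinarith [mul_nonneg (by nlinarith : 0 ≤ A ^ 2 + A + 1) h2.le]
  have hy₁ := hval _ hs₁
  have hy₂ := hval _ hs₂
  set y₁ := a + k₁ * L / M with hy₁def
  set y₂ := a + k₂ * L / M with hy₂def
  set p := a + j * L / M with hpdef
  set P := a + (j + 3 * m) * L / M with hPdef
  have hPp : P - p ≤ 6 * d ^ 2 * L := by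
    have : P - p = 3 * m * L / M := by rw [hPdef, hpdef]; ring
    rw [this, div_le_iff₀ hM']
    nlinarith
  have hmono : ∀ s t : ℝ, s ≤ t → a + s * L / M ≤ a + t * L / M := fun s t hst => by gcongr
  have hgap : d ^ 2 * L ≤ y₂ - y₁ := by
    have h1 : (k₁ : ℝ) + m ≤ k₂ := by exact_mod_cast (by omega : k₁ + m ≤ k₂)
    have h2 : y₂ - y₁ = (k₂ - k₁) * L / M := by rw [hy₁def, hy₂def]; ring
    rw [h2, le_div_iff₀ hM']
    nlinarith
  have hy₁mem : p ≤ y₁ := hmono _ _ (by exact_mod_cast hk₁)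
  have hy₂mem : y₂ ≤ P := hmono _ _ (by exact_mod_cast (by omega : k₂ ≤ j + 3 * m))
  have hxe : a + ((x - a) / L * M) * L / M = x := by field_simp; ring
  have hxp : p ≤ x := hxe ▸ hmono _ _ hj1
  have hxP : x ≤ P := hxe ▸ hmono _ _ hj2
  have hdL : 0 < d ^ 2 * L := by positivity
  obtain ⟨ξ, hξ, hξe⟩ := exists_hasDerivAt_eq_slope v v' (by linarith : y₁ < y₂)
    (fun z _ => (hv z).continuousAt.continuousWithinAt) fun z _ => hv z
  have hξb : |v' ξ| ≤ 2 * (A + 1) * E * L⁻¹ * d := by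
    rw [hξe, abs_div, abs_of_pos (by linarith : 0 < y₂ - y₁), div_le_iff₀ (by linarith)]
    calc |v y₂ - v y₁| ≤ |v y₂| + |v y₁| := abs_sub _ _
      _ ≤ 2 * (A + 1) * E * d ^ 3 := by linarith
      _ = 2 * (A + 1) * E * L⁻¹ * d * (d ^ 2 * L) := by field_simp
      _ ≤ _ := by gcongr
  have hderiv : ∀ z ∈ Icc p P, |v' z| ≤ (2 * (A + 1) + B / 2 + 3) * E * L⁻¹ * d := by
    intro z hz
    -- this `τ` balances the energy term against the length `6 d² L` of the block
    have h1 := abs_sub_le_of_energy hv' hc hint hen (by positivity : 0 < d * L ^ 2 / E) ξ z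
    have h2 : |z - ξ| ≤ 6 * d ^ 2 * L := by
      rw [abs_le]
      constructor <;> linarith [hz.1, hz.2, hξ.1, hξ.2]
    have h3 : d * L ^ 2 / E / 2 * (B * (E ^ 2 / L ^ 3)) = B / 2 * E * L⁻¹ * d := by
      field_simp
    have h4 : |z - ξ| / (2 * (d * L ^ 2 / E)) ≤ 3 * E * L⁻¹ * d := by
      calc |z - ξ| / (2 * (d * L ^ 2 / E)) ≤ 6 * d ^ 2 * L / (2 * (d * L ^ 2 / E)) := by gcongr
        _ = 3 * E * L⁻¹ * d := by field_simp; ring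
    have h5 : |v' z| ≤ |v' z - v' ξ| + |v' ξ| := by
      simpa using abs_add_le (v' z - v' ξ) (v' ξ)
    calc |v' z| ≤ B / 2 * E * L⁻¹ * d + 3 * E * L⁻¹ * d + 2 * (A + 1) * E * L⁻¹ * d := by linarith
      _ = _ := by ring
  refine ⟨?_, hderiv x ⟨hxp, hxP⟩⟩
  have hmv := (convex_Icc p P).norm_image_sub_le_of_norm_hasDerivWithin_le
    (fun z _ => (hv z).hasDerivWithinAt) hderiv
    (⟨hy₁mem, by linarith⟩ : y₁ ∈ Icc p P) (⟨hxp, hxP⟩ : x ∈ Icc p P)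
  simp only [Real.norm_eq_abs] at hmv
  have h2 : |x - y₁| ≤ 6 * d ^ 2 * L := by
    rw [abs_le]
    constructor <;> linarith
  have h5 : |v x| ≤ |v x - v y₁| + |v y₁| := by simpa using abs_add_le (v x - v y₁) (v y₁)
  calc |v x| ≤ (2 * (A + 1) + B / 2 + 3) * E * L⁻¹ * d * |x - y₁| + (A + 1) * E * d ^ 3 := by
        linarith
    _ ≤ (2 * (A + 1) + B / 2 + 3) * E * L⁻¹ * d * (6 * d ^ 2 * L) + (A + 1) * E * d ^ 3 := by
        gcongr
    _ = _ := by field_simp; ring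

/-! ### Consequences of minimality -/

lemma Jfun_eq {N : ℕ} {xs g : ℕ → ℝ} {lam μ : ℝ} (hμ : 0 < μ) {φ : ℝ → ℝ} (h : inW42 φ) :
    Jfun N xs g lam μ φ = (∑ k ∈ Finset.range N, (φ (xs k) - g k) ^ 2) + lam * μ ^ 3 *
      ((μ ^ 4)⁻¹ * (∫ x, iteratedDeriv 0 φ x ^ 2) + μ ^ 4 * ∫ x, iteratedDeriv 4 φ x ^ 2) := by
  have h0 : Integrable fun x => φ x ^ 2 := by simpa using h.2 0 (by norm_num)
  rw [Jfun, integral_add ((h.2 4 le_rfl).const_mul _) (h0.const_mul _), integral_const_mul,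
    integral_const_mul]
  simp only [iteratedDeriv_zero]
  congr 1
  field_simp
  ring

/-- Consequences of minimality for `v = f - u`: mean-square smallness at the nodes and the
energy bound for `v''`. -/
lemma minimizer_bounds {c₁ c₂ L lam μ ε E : ℝ} {N : ℕ} {xs g : ℕ → ℝ} {u f : ℝ → ℝ}
    (hc₁ : 0 < c₁) (hL : 0 < L) (hN : 0 < N) (hlam : 0 < lam) (hμ : 0 < μ) (hε : 0 < ε)
    (hu : inW42 u) (hf : inW42 f)
    (hmin : Jfun N xs g lam μ u ≤ Jfun N xs g lam μ f)
    (hsamp : ∀ k, k < N → |f (xs k) - g k| ≤ ε)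
    (hbud : (μ ^ 4)⁻¹ * (∫ x, iteratedDeriv 0 f x ^ 2) + μ ^ 4 * (∫ x, iteratedDeriv 4 f x ^ 2) ≤
      2 * (E ^ 2 / L ^ 3))
    (hlow : c₁ ≤ (lam / N) * (μ / L) ^ 3 * (E / ε) ^ 2)
    (hup : (lam / N) * (μ / L) ^ 3 * (E / ε) ^ 2 ≤ c₂) :
    ∑ k ∈ Finset.range N, (f - u) (xs k) ^ 2 ≤ (4 + 4 * c₂) * (N * ε ^ 2) ∧
    ∫ x, iteratedDeriv 2 (f - u) x ^ 2 ≤ (4 + 1 / c₁) * (E ^ 2 / L ^ 3) := by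
  rw [Jfun_eq hμ hu, Jfun_eq hμ hf] at hmin
  have hN' : (0 : ℝ) < N := by exact_mod_cast hN
  have hw : (lam / N) * (μ / L) ^ 3 * (E / ε) ^ 2 =
      lam * μ ^ 3 * (E ^ 2 / L ^ 3) / (N * ε ^ 2) := by field_simp
  rw [hw] at hlow hup
  rw [le_div_iff₀ (by positivity)] at hlow
  rw [div_le_iff₀ (by positivity)] at hup
  have hSf : ∑ k ∈ Finset.range N, (f (xs k) - g k) ^ 2 ≤ N * ε ^ 2 := by
    calc _ ≤ ∑ _k ∈ Finset.range N, ε ^ 2 := Finset.sum_le_sum fun k hk =>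
          sq_le_sq' (by linarith [(abs_le.1 (hsamp k (Finset.mem_range.1 hk))).1])
            (abs_le.1 (hsamp k (Finset.mem_range.1 hk))).2
      _ = _ := by simp
  have hSu : 0 ≤ ∑ k ∈ Finset.range N, (u (xs k) - g k) ^ 2 :=
    Finset.sum_nonneg fun _ _ => sq_nonneg _
  have hint0 : ∀ i, ∀ φ : ℝ → ℝ, 0 ≤ ∫ x, iteratedDeriv i φ x ^ 2 :=
    fun i φ => integral_nonneg fun x => sq_nonneg _
  have hQ : 0 < lam * μ ^ 3 := by positivity
  have hv0 := hf.integral_sub_sq_le hu (i := 0) (by norm_num)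
  have hv4 := hf.integral_sub_sq_le hu (i := 4) le_rfl
  have hv2 := integral_sq_iteratedDeriv_two_le (hf.sub hu) (by positivity : 0 < μ ^ 4)
  have hu0 := hint0 0 u
  have hu4 := hint0 4 u
  generalize (∫ x, iteratedDeriv 0 u x ^ 2) = u0 at *
  generalize (∫ x, iteratedDeriv 4 u x ^ 2) = u4 at *
  generalize (∫ x, iteratedDeriv 0 f x ^ 2) = f0 at *
  generalize (∫ x, iteratedDeriv 4 f x ^ 2) = f4 at *
  generalize (∫ x, iteratedDeriv 0 (f - u) x ^ 2) = v0 at *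
  generalize (∫ x, iteratedDeriv 4 (f - u) x ^ 2) = v4 at *
  generalize (∫ x, iteratedDeriv 2 (f - u) x ^ 2) = v2 at *
  have hbud' := mul_le_mul_of_nonneg_left hbud hQ.le
  have hXu : 0 ≤ lam * μ ^ 3 * ((μ ^ 4)⁻¹ * u0 + μ ^ 4 * u4) := by positivity
  constructor
  · calc ∑ k ∈ Finset.range N, (f - u) (xs k) ^ 2
        ≤ ∑ k ∈ Finset.range N, (2 * (f (xs k) - g k) ^ 2 + 2 * (u (xs k) - g k) ^ 2) :=
          Finset.sum_le_sum fun k _ => by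
            simp only [Pi.sub_apply]
            nlinarith [sq_nonneg ((f (xs k) - g k) + (u (xs k) - g k))]
      _ = 2 * (∑ k ∈ Finset.range N, (f (xs k) - g k) ^ 2) +
            2 * ∑ k ∈ Finset.range N, (u (xs k) - g k) ^ 2 := by
          rw [Finset.sum_add_distrib, Finset.mul_sum, Finset.mul_sum]
      _ ≤ _ := by linarith
  · have h1 : (μ ^ 4)⁻¹ * u0 + μ ^ 4 * u4 ≤ (1 / c₁ + 2) * (E ^ 2 / L ^ 3) := by
      have h2 : (N : ℝ) * ε ^ 2 ≤ lam * μ ^ 3 * (1 / c₁ * (E ^ 2 / L ^ 3)) := by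
        have : lam * μ ^ 3 * (1 / c₁ * (E ^ 2 / L ^ 3)) = lam * μ ^ 3 * (E ^ 2 / L ^ 3) / c₁ := by
          ring
        rw [this, le_div_iff₀ hc₁]
        linarith
      refine le_of_mul_le_mul_left ?_ hQ
      linarith
    have h3 := mul_le_mul_of_nonneg_left hv0 (by positivity : 0 ≤ (μ ^ 4)⁻¹)
    have h4 := mul_le_mul_of_nonneg_left hv4 (by positivity : 0 ≤ μ ^ 4)
    linarith

/-- Theorem of Appendix C on approximate differentiation from discrete noisy
samples: if `u` minimizes the Tikhonov functional `J` over the class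
`W^{4,2}(ℝ)`, `f` is the underlying smooth function with sampling error `≤ ε`
and smoothness budget `E`, and `δ = max{(1−1/N)^{-1/2} ε/E, (N−1)^{-2}}`, then
for every window `0 < c₁ ≤ c₂` there are constants `C, δ₀ > 0` (depending only
on `c₁, c₂`) such that whenever `c₁ ≤ (λ/N)(μ/(b−a))³(E/ε)² ≤ c₂` and
`δ ≤ δ₀`, one has `max |f − u| ≤ C E δ^{3/4}` and
`(b−a) max |f' − u'| ≤ C E δ^{1/4}` on `[a,b]`. -/
theorem stmt8 :
    ∀ c₁ c₂ : ℝ, 0 < c₁ → c₁ ≤ c₂ →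
      ∃ C > (0 : ℝ), ∃ δ₀ > (0 : ℝ),
        ∀ (a b : ℝ) (N : ℕ) (lam μ ε E δ : ℝ) (g : ℕ → ℝ) (u f : ℝ → ℝ),
          a < b → 3 ≤ N → 0 < lam → 0 < μ → 0 < ε → 0 < E →
          inW42 u →
          (∀ φ : ℝ → ℝ, inW42 φ →
            Jfun N (fun k => a + k * (b - a) / (N - 1)) g lam μ u ≤
              Jfun N (fun k => a + k * (b - a) / (N - 1)) g lam μ φ) →
          inW42 f →
          (∀ k, k < N → |f (a + k * (b - a) / (N - 1)) - g k| ≤ ε) →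
          (μ ^ (-(4 : ℝ)) * (∫ x : ℝ, (f x) ^ 2)
              + μ ^ (4 : ℝ) * (∫ x : ℝ, (iteratedDeriv 4 f x) ^ 2)
            ≤ 2 * (b - a) ^ (-(3 : ℝ)) * E ^ 2) →
          δ = max ((1 - 1 / (N : ℝ)) ^ (-(1 : ℝ) / 2) * (ε / E))
                (((N : ℝ) - 1) ^ (-(2 : ℝ))) →
          (c₁ ≤ (lam / N) * (μ / (b - a)) ^ 3 * (E / ε) ^ 2 ∧
            (lam / N) * (μ / (b - a)) ^ 3 * (E / ε) ^ 2 ≤ c₂) →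
          δ ≤ δ₀ →
          (∀ x ∈ Icc a b, |f x - u x| ≤ C * E * δ ^ ((3 : ℝ) / 4)) ∧
          (∀ x ∈ Icc a b,
            |deriv f x - deriv u x| ≤ C * E * (b - a)⁻¹ * δ ^ ((1 : ℝ) / 4)) := by
  intro c₁ c₂ hc₁ hc
  have hc₂ : 0 < c₂ := hc₁.trans_le hc
  -- `2 * (4 + 4 c₂)`: the factor `2` absorbs `N ≤ 2 (N - 1)`
  set A := 2 * (4 + 4 * c₂) with hA
  set B := 4 + 1 / c₁ with hB
  have hA0 : 0 ≤ A := by positivity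
  have hB0 : 0 ≤ B := by positivity
  refine ⟨(A + 1) + 6 * (2 * (A + 1) + B / 2 + 3), by positivity, 1 / 36, by norm_num, ?_⟩
  intro a b N lam μ ε E δ g u f hab hN hlam hμ hε hE hu hmin hf hsamp hbud hδ hwin hδ₀
  have hL : 0 < b - a := sub_pos.2 hab
  obtain ⟨M, rfl⟩ : ∃ M, N = M + 1 := ⟨N - 1, by omega⟩
  have hM : 0 < M := by omega
  have hM' : (0 : ℝ) < M := by exact_mod_cast hM
  have hM1 : (1 : ℝ) ≤ M := by exact_mod_cast hM
  have hcast : ((M + 1 : ℕ) : ℝ) - 1 = M := by push_cast; ring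
  simp only [hcast] at hmin hsamp hδ
  have hδε : ε ≤ E * δ := by
    have h1 : (1 : ℝ) ≤ (1 - 1 / ((M + 1 : ℕ) : ℝ)) ^ (-(1 : ℝ) / 2) := by
      have hlt : 1 / ((M + 1 : ℕ) : ℝ) < 1 := by
        rw [div_lt_one (by positivity)]
        push_cast
        linarith
      have hpos : 0 < 1 / ((M + 1 : ℕ) : ℝ) := by positivity
      exact Real.one_le_rpow_of_pos_of_le_one_of_nonpos (by linarith) (by linarith) (by norm_num)
    have h2 : ε / E ≤ δ := by
      rw [hδ]
      exact le_trans (le_mul_of_one_le_left (by positivity) h1) (le_max_left _ _)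
    rwa [div_le_iff₀' hE] at h2
  have hδ0 : 0 < δ := pos_of_mul_pos_right (hε.trans_le hδε) hE.le
  obtain ⟨d, hd⟩ : ∃ d, d = δ ^ ((1 : ℝ) / 4) := ⟨_, rfl⟩
  have hd0 : 0 < d := hd ▸ Real.rpow_pos_of_pos hδ0 _
  have hd4 : d ^ 4 = δ := by
    rw [hd, ← Real.rpow_natCast, ← Real.rpow_mul hδ0.le]
    norm_num
  have hd3 : δ ^ ((3 : ℝ) / 4) = d ^ 3 := by
    rw [hd, ← Real.rpow_natCast, ← Real.rpow_mul hδ0.le]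
    norm_num
  have hmesh : 1 ≤ d ^ 2 * M := by
    have h1 : (M : ℝ) ^ (-(2 : ℝ)) ≤ d ^ 4 := by
      rw [hd4, hδ]
      exact le_max_right _ _
    rw [Real.rpow_neg hM'.le, Real.rpow_ofNat, inv_le_iff_one_le_mul₀ (by positivity)] at h1
    have h2 : (1 : ℝ) ^ 2 ≤ (d ^ 2 * M) ^ 2 := by linarith
    exact le_of_sq_le_sq h2 (by positivity)
  have hsmall : 6 * d ^ 2 ≤ 1 := by nlinarith
  have hbud' : (μ ^ 4)⁻¹ * (∫ x, iteratedDeriv 0 f x ^ 2) +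
      μ ^ 4 * (∫ x, iteratedDeriv 4 f x ^ 2) ≤ 2 * (E ^ 2 / (b - a) ^ 3) := by
    rw [Real.rpow_neg hμ.le, Real.rpow_neg hL.le, Real.rpow_ofNat, Real.rpow_ofNat] at hbud
    simp only [iteratedDeriv_zero]
    calc _ ≤ _ := hbud
      _ = _ := by ring
  obtain ⟨hsum, hen⟩ := minimizer_bounds hc₁ hL (Nat.succ_pos M) hlam hμ hε hu hf (hmin f hf)
    hsamp hbud' hwin.1 hwin.2
  have hv := hf.sub hu
  have hsum' : ∑ k ∈ Finset.range (M + 1), (f - u) (a + k * (b - a) / M) ^ 2 ≤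
      A * M * (E * d ^ 4) ^ 2 := by
    calc _ ≤ (4 + 4 * c₂) * (((M + 1 : ℕ) : ℝ) * ε ^ 2) := hsum
      _ ≤ (4 + 4 * c₂) * ((2 * M) * (E * d ^ 4) ^ 2) := by
          rw [hd4]
          push_cast
          gcongr
          linarith
      _ = _ := by rw [hA]; ring
  have hmain : ∀ x ∈ Icc a b, _ := fun x hx =>
    local_bounds (v := f - u) (v' := iteratedDeriv 1 (f - u)) (v'' := iteratedDeriv 2 (f - u))
      (fun x => by simpa using hv.hasDerivAt (i := 0) (by norm_num) x)
      (fun x => hv.hasDerivAt (i := 1) (by norm_num) x) (hv.continuous (by norm_num))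
      (hv.2 2 (by norm_num)) hM hL hE hd0 hA0 hB0 hen hsum' hmesh hsmall
      (show x ∈ Icc a (a + (b - a)) by simpa using hx)
  rw [hd3, ← hd]
  refine ⟨fun x hx => (hmain x hx).1, fun x hx => ?_⟩
  have h := (hmain x hx).2
  rw [hf.iteratedDeriv_sub hu (by norm_num), iteratedDeriv_one, iteratedDeriv_one] at h
  have hK : 2 * (A + 1) + B / 2 + 3 ≤ (A + 1) + 6 * (2 * (A + 1) + B / 2 + 3) := by linarith
  refine h.trans ?_
  generalize 2 * (A + 1) + B / 2 + 3 = K at *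
  gcongr
end

section
/- Let ν = π/8. For every real x, ∫₀^∞ cos(xξ)/(1 + ξ⁸) dξ = (π/4)·[ e^{−|x|·cos ν}·cos(|x|·sin ν − ν) + e^{−|x|·sin ν}·sin(|x|·cos ν + ν) ]. -/
/-!
The even function `G t = ∑ ω e^{iω|t|}`, summed over the four roots `ω` of `ω ^ 8 = -1` in the upper
half-plane, is continuous and integrable. Each `e^{iω|t|}` has Fourier integral
`2iω / (ω² - s²)` at frequency `s` (`integral_exp_abs`), and the squares `ω²` are the fourth
roots of `-1`, so partial fractions (`sum_root_sq_div`) show that the transform of `G` is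
`8i / (1 + s ^ 8)`. This is integrable, and Fourier inversion (`G_eq`) then expresses
`∫ e^{isx} / (1 + s ^ 8) ds` over the line as a multiple of `G x`. Grouping the roots in pairs
symmetric about the imaginary axis puts `G` in the trigonometric form of the theorem
(`G_closed_form`). Fourier inversion thus replaces contour integration.
-/

open Set

open MeasureTheory FourierTransform

namespace OcticKernel

/-- The four roots of `z ^ 8 = -1` in the open upper half-plane, listed counterclockwise from
`exp (π i / 8)` and written in terms of `cos (π / 8)` and `sin (π / 8)`. -/
noncomputable def root : Fin 4 → ℂ :=
  ![Real.cos (Real.pi / 8) + Real.sin (Real.pi / 8) * Complex.I,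
    Real.sin (Real.pi / 8) + Real.cos (Real.pi / 8) * Complex.I,
    -Real.sin (Real.pi / 8) + Real.cos (Real.pi / 8) * Complex.I,
    -Real.cos (Real.pi / 8) + Real.sin (Real.pi / 8) * Complex.I]

/-- `∑ ω e^{iω|t|}` over the roots `ω` in the upper half-plane: up to a constant, the sum of the
residues of `e^{i|t|z} / (1 + z ^ 8)` there. -/
noncomputable def G (t : ℝ) : ℂ :=
  ∑ k, root k * Complex.exp (Complex.I * root k * |t|)

lemma root_im_pos (k : Fin 4) : 0 < (root k).im := by
  have hs : 0 < Real.sin (Real.pi / 8) :=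
    Real.sin_pos_of_pos_of_lt_pi (by positivity) (by linarith [Real.pi_pos])
  have hc : 0 < Real.cos (Real.pi / 8) :=
    Real.cos_pos_of_mem_Ioo ⟨by linarith [Real.pi_pos], by linarith [Real.pi_pos]⟩
  fin_cases k <;> simp [root, -Real.cos_pi_div_eight, -Real.sin_pi_div_eight, hs, hc,
    -Complex.ofReal_cos, -Complex.ofReal_sin]

/-- The two half-line pieces of the Fourier integral of `t ↦ e^{iω|t|}`: both are integrals of
a decaying exponential, which gives integrability and the value at once. -/
lemma integral_exp_abs {w : ℂ} (hw : 0 < w.im) (s : ℝ) :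
    Integrable (fun t : ℝ => Complex.exp (-s * t * Complex.I) *
      Complex.exp (Complex.I * w * |t|)) ∧
    ∫ t : ℝ, Complex.exp (-s * t * Complex.I) * Complex.exp (Complex.I * w * |t|) =
      2 * Complex.I * w / (w ^ 2 - (s : ℂ) ^ 2) := by
  have h1 : (Complex.I * (w - s)).re < 0 := by simpa using hw
  have h2 : 0 < (-Complex.I * (w + s)).re := by simpa using hw
  have e1 : EqOn (fun t : ℝ => Complex.exp (Complex.I * (w - s) * t))
      (fun t : ℝ => Complex.exp (-s * t * Complex.I) * Complex.exp (Complex.I * w * |t|))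
      (Ioi 0) := by
    intro t ht
    simp only [abs_of_pos (mem_Ioi.1 ht), ← Complex.exp_add]
    congr 1
    ring
  have e2 : EqOn (fun t : ℝ => Complex.exp (-Complex.I * (w + s) * t))
      (fun t : ℝ => Complex.exp (-s * t * Complex.I) * Complex.exp (Complex.I * w * |t|))
      (Iic 0) := by
    intro t ht
    simp only [abs_of_nonpos (mem_Iic.1 ht), ← Complex.exp_add]
    congr 1
    push_cast
    ring
  have i1 := (integrableOn_exp_mul_complex_Ioi h1 0).congr_fun e1 measurableSet_Ioi
  have i2 := (integrableOn_exp_mul_complex_Iic h2 0).congr_fun e2 measurableSet_Iic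
  refine ⟨?_, ?_⟩
  · rw [← integrableOn_univ, ← Iic_union_Ioi (a := (0 : ℝ))]
    exact i2.union i1
  · rw [← intervalIntegral.integral_Iic_add_Ioi i2 i1,
      ← setIntegral_congr_fun measurableSet_Iic e2, ← setIntegral_congr_fun measurableSet_Ioi e1,
      integral_exp_mul_complex_Ioi h1, integral_exp_mul_complex_Iic h2]
    have n1 : w - s ≠ 0 := fun h => by simp [h] at h1
    have n2 : w + s ≠ 0 := fun h => by simp [h] at h2
    have n3 : w ^ 2 - (s : ℂ) ^ 2 ≠ 0 := by
      rw [sq_sub_sq]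
      exact mul_ne_zero n2 n1
    have hI := Complex.I_sq
    simp only [Complex.ofReal_zero, mul_zero, Complex.exp_zero]
    field_simp
    linear_combination (-2 * w * (w ^ 2 - (s : ℂ) ^ 2)) * hI

/-- The partial fraction expansion `∑ z / (z - u) = 4 / (1 + u ^ 4)` over the fourth roots `z`
of `-1`, at `u = s ^ 2`. -/
lemma sum_root_sq_div (s : ℝ) :
    ∑ k, root k ^ 2 / (root k ^ 2 - (s : ℂ) ^ 2) = 4 / (1 + (s : ℂ) ^ 8) := by
  -- The squares of the roots are `a (±1 ± i)` with `a = cos (π / 4)`.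
  obtain ⟨a, ha, h0, h1, h2, h3⟩ : ∃ a : ℂ, 2 * a ^ 2 = 1 ∧
      root 0 ^ 2 = a * (1 + Complex.I) ∧ root 1 ^ 2 = a * (-1 + Complex.I) ∧
      root 2 ^ 2 = a * (-1 - Complex.I) ∧ root 3 ^ 2 = a * (1 - Complex.I) := by
    have hcos := Real.cos_two_mul' (Real.pi / 8)
    have hsin := Real.sin_two_mul (Real.pi / 8)
    rw [show 2 * (Real.pi / 8) = Real.pi / 4 by ring] at hcos hsin
    have hsq := Real.sin_sq_add_cos_sq (Real.pi / 4)
    have heq : Real.sin (Real.pi / 4) = Real.cos (Real.pi / 4) := by simp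
    rw [heq] at hsin hsq
    generalize Real.cos (Real.pi / 4) = a at *
    have hc : (a : ℂ) = (Real.cos (Real.pi / 8) : ℂ) ^ 2 - (Real.sin (Real.pi / 8) : ℂ) ^ 2 := by
      exact_mod_cast hcos
    have hs : (a : ℂ) = 2 * (Real.sin (Real.pi / 8) : ℂ) * (Real.cos (Real.pi / 8) : ℂ) := by
      exact_mod_cast hsin
    have hI := Complex.I_sq
    refine ⟨a, by exact_mod_cast (by linarith : 2 * a ^ 2 = 1), ?_, ?_, ?_, ?_⟩
    all_goals
      simp only [root, Matrix.cons_val]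
      generalize (Real.cos (Real.pi / 8) : ℂ) = c at *
      generalize (Real.sin (Real.pi / 8) : ℂ) = d at *
    · linear_combination d ^ 2 * hI - hc - Complex.I * hs
    · linear_combination c ^ 2 * hI + hc - Complex.I * hs
    · linear_combination c ^ 2 * hI + hc + Complex.I * hs
    · linear_combination d ^ 2 * hI - hc + Complex.I * hs
  have hI := Complex.I_sq
  have n (k : Fin 4) : root k ^ 2 - (s : ℂ) ^ 2 ≠ 0 := by
    have := root_im_pos k
    rw [sq_sub_sq]
    refine mul_ne_zero (fun h => ?_) (fun h => ?_)
    all_goals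
      have := congrArg Complex.im h
      simp at this
      linarith
  have n4 : 1 + (s : ℂ) ^ 8 ≠ 0 := by
    have : (1 + s ^ 8 : ℝ) ≠ 0 := by positivity
    exact_mod_cast this
  have h4 (k : Fin 4) : (root k ^ 2) ^ 4 = -1 := by
    fin_cases k <;> simp only [Fin.zero_eta, Fin.mk_one, Fin.reduceFinMk]
    · rw [h0]
      linear_combination a ^ 4 * (Complex.I ^ 2 + 4 * Complex.I + 5) * hI - (2 * a ^ 2 + 1) * ha
    · rw [h1]
      linear_combination a ^ 4 * (Complex.I ^ 2 - 4 * Complex.I + 5) * hI - (2 * a ^ 2 + 1) * ha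
    · rw [h2]
      linear_combination a ^ 4 * (Complex.I ^ 2 + 4 * Complex.I + 5) * hI - (2 * a ^ 2 + 1) * ha
    · rw [h3]
      linear_combination a ^ 4 * (Complex.I ^ 2 - 4 * Complex.I + 5) * hI - (2 * a ^ 2 + 1) * ha
  -- Factor `z ^ 4 - u ^ 4 = -(1 + u ^ 4)` by `z - u`; the power sums of the `z` of exponents
  -- 1, 2 and 3 vanish, so only the constant terms survive.
  have term (k : Fin 4) : root k ^ 2 / (root k ^ 2 - (s : ℂ) ^ 2) =
      (1 - (root k ^ 2) ^ 3 * s ^ 2 - (root k ^ 2) ^ 2 * s ^ 4 - root k ^ 2 * s ^ 6) /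
        (1 + (s : ℂ) ^ 8) := by
    rw [div_eq_div_iff (n k) n4]
    linear_combination (s : ℂ) ^ 2 * h4 k
  simp_rw [term]
  rw [Fin.sum_univ_four, h0, h1, h2, h3, ← add_div, ← add_div, ← add_div]
  congr 1
  linear_combination -4 * a ^ 2 * (s : ℂ) ^ 4 * hI

lemma fourier_G (v : ℝ) :
    𝓕 G v = 8 * Complex.I * ((1 + (2 * Real.pi * v) ^ 8 : ℝ) : ℂ)⁻¹ := by
  rw [Real.fourier_real_eq_integral_exp_smul]
  have h (k : Fin 4) := integral_exp_abs (root_im_pos k) (2 * Real.pi * v)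
  have e : ∀ t : ℝ, Complex.exp (↑(-2 * Real.pi * t * v) * Complex.I) • G t =
      ∑ k, root k * (Complex.exp (-(2 * Real.pi * v : ℝ) * t * Complex.I) *
        Complex.exp (Complex.I * root k * |t|)) := by
    intro t
    rw [G, smul_eq_mul, Finset.mul_sum]
    refine Finset.sum_congr rfl fun k _ => ?_
    rw [show ((-2 * Real.pi * t * v : ℝ) : ℂ) * Complex.I =
      -(2 * Real.pi * v : ℝ) * t * Complex.I by push_cast; ring]
    ring
  simp_rw [e]
  rw [integral_finsetSum _ fun k _ => (h k).1.const_mul _]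
  simp_rw [integral_const_mul, (h _).2]
  have := sum_root_sq_div (2 * Real.pi * v)
  calc _ = 2 * Complex.I * ∑ k, root k ^ 2 / (root k ^ 2 - ((2 * Real.pi * v : ℝ) : ℂ) ^ 2) := by
        rw [Finset.mul_sum]
        refine Finset.sum_congr rfl fun k _ => ?_
        ring
    _ = _ := by
        rw [this]
        push_cast
        ring

lemma integrable_inv_one_add_pow_eight : Integrable fun s : ℝ => (1 + s ^ 8)⁻¹ := by
  refine (integrable_inv_one_add_sq.const_mul 2).mono' ?_ (Filter.Eventually.of_forall fun s => ?_)
  · exact Measurable.aestronglyMeasurable (by fun_prop)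
  · rw [Real.norm_of_nonneg (by positivity), ← div_eq_mul_inv, inv_eq_one_div,
      div_le_div_iff₀ (by positivity) (by positivity)]
    nlinarith [sq_nonneg (s ^ 4 - 1), sq_nonneg (s ^ 4 - s ^ 2), sq_nonneg (s ^ 2 - 1)]

/-- Fourier inversion for `G`. -/
lemma G_eq (x : ℝ) :
    G x = 8 * Complex.I * (2 * Real.pi)⁻¹ *
      ∫ s : ℝ, Complex.exp (s * x * Complex.I) * ((1 + s ^ 8 : ℝ) : ℂ)⁻¹ := by
  have hcont : Continuous G := by
    unfold G
    fun_prop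
  have hint : Integrable G := by
    refine integrable_finsetSum _ fun k _ => Integrable.const_mul ?_ _
    simpa using (integral_exp_abs (root_im_pos k) 0).1
  have hF : 𝓕 G = fun v : ℝ => 8 * Complex.I * ((1 + (2 * Real.pi * v) ^ 8 : ℝ) : ℂ)⁻¹ :=
    funext fourier_G
  have hFint : Integrable (𝓕 G) := by
    rw [hF]
    refine Integrable.const_mul ?_ _
    have := (integrable_inv_one_add_pow_eight.comp_mul_left' Real.two_pi_pos.ne').ofReal (𝕜 := ℂ)
    simpa using this
  have key := congrFun (hcont.fourierInv_fourier_eq hint hFint) x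
  rw [← key, Real.fourierInv_eq', hF]
  have := Measure.integral_comp_mul_left (fun s : ℝ => 8 * Complex.I *
    (Complex.exp (s * x * Complex.I) * ((1 + s ^ 8 : ℝ) : ℂ)⁻¹)) (2 * Real.pi)
  rw [integral_const_mul, integral_const_mul, abs_of_pos (by positivity), Complex.real_smul] at this
  calc _ = _ := ?_
    _ = _ := this
    _ = _ := by push_cast; ring
  rw [← integral_const_mul]
  refine integral_congr_ae (Filter.Eventually.of_forall fun v => ?_)
  simp only [smul_eq_mul, RCLike.inner_apply, conj_trivial]
  rw [show ((2 * Real.pi * (x * v) : ℝ) : ℂ) * Complex.I =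
      (2 * Real.pi * v : ℝ) * x * Complex.I by push_cast; ring]
  ring

/-- Roots symmetric about the imaginary axis contribute terms `ζ` and `-conj ζ` to `G`, so each
pair adds up to `2i Im ζ`. -/
lemma G_closed_form (x : ℝ) :
    G x = 2 * Complex.I * ((Real.exp (-|x| * Real.cos (Real.pi / 8)) *
            Real.cos (|x| * Real.sin (Real.pi / 8) - Real.pi / 8)
          + Real.exp (-|x| * Real.sin (Real.pi / 8)) *
            Real.sin (|x| * Real.cos (Real.pi / 8) + Real.pi / 8) : ℝ) : ℂ) := by
  have hexp (p q y : ℝ) : Complex.exp (Complex.I * (p + q * Complex.I) * y) =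
      Real.exp (-y * q) * (Real.cos (y * p) + Real.sin (y * p) * Complex.I) := by
    push_cast
    rw [← Complex.exp_mul_I, ← Complex.exp_add]
    congr 1
    linear_combination (q * y : ℂ) * Complex.I_sq
  rw [G, Fin.sum_univ_four, Real.cos_sub, Real.sin_add]
  simp only [root, Matrix.cons_val]
  rw [← Complex.ofReal_neg, ← Complex.ofReal_neg, hexp, hexp, hexp, hexp]
  simp only [mul_neg, Real.cos_neg, Real.sin_neg]
  generalize Real.cos (Real.pi / 8) = c
  generalize Real.sin (Real.pi / 8) = d
  push_cast
  ring

end OcticKernel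

/-- Closed-form evaluation (by residues) of the decaying fundamental solution
of `d⁸/dx⁸ + 1`: with `ν = π/8`, for every real `x`,
`∫₀^∞ cos(xξ)/(1+ξ⁸) dξ
  = (π/4)[e^{−|x|cos ν} cos(|x| sin ν − ν) + e^{−|x| sin ν} sin(|x| cos ν + ν)]`. -/
theorem stmt13 (x : ℝ) :
    (∫ ξ in Ioi (0 : ℝ), Real.cos (x * ξ) / (1 + ξ ^ 8)) =
      (Real.pi / 4) *
        (Real.exp (-|x| * Real.cos (Real.pi / 8)) *
            Real.cos (|x| * Real.sin (Real.pi / 8) - Real.pi / 8)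
          + Real.exp (-|x| * Real.sin (Real.pi / 8)) *
            Real.sin (|x| * Real.cos (Real.pi / 8) + Real.pi / 8)) := by
  have hG := OcticKernel.G_eq x
  rw [OcticKernel.G_closed_form] at hG
  have hint : Integrable fun s : ℝ =>
      Complex.exp (s * x * Complex.I) * ((1 + s ^ 8 : ℝ) : ℂ)⁻¹ := by
    refine (OcticKernel.integrable_inv_one_add_pow_eight.ofReal (𝕜 := ℂ)).mono
      (Measurable.aestronglyMeasurable (by fun_prop)) (Filter.Eventually.of_forall fun s => ?_)
    rw [norm_mul, ← Complex.ofReal_mul, Complex.norm_exp_ofReal_mul_I]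
    simp
  have hre : (∫ s : ℝ, Complex.exp (s * x * Complex.I) * ((1 + s ^ 8 : ℝ) : ℂ)⁻¹).re =
      ∫ s : ℝ, Real.cos (x * |s|) / (1 + |s| ^ 8) := by
    have := integral_re hint
    simp only [RCLike.re_to_complex] at this
    rw [← this]
    refine integral_congr_ae (Filter.Eventually.of_forall fun s => ?_)
    have hcos : Real.cos (x * |s|) = Real.cos (s * x) := by
      rw [← Real.cos_abs (x * |s|), ← Real.cos_abs (s * x), abs_mul, abs_mul, abs_abs, mul_comm]
    simp only
    rw [hcos, (by decide : Even 8).pow_abs, ← Complex.ofReal_mul, ← Complex.ofReal_inv,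
      Complex.re_mul_ofReal, Complex.exp_ofReal_mul_I_re, div_eq_mul_inv]
  rw [integral_comp_abs (f := fun s => Real.cos (x * s) / (1 + s ^ 8))] at hre
  have hpi := Real.pi_ne_zero
  have hpi' : (Real.pi : ℂ) ≠ 0 := by exact_mod_cast hpi
  generalize (∫ s : ℝ, Complex.exp (s * x * Complex.I) * ((1 + s ^ 8 : ℝ) : ℂ)⁻¹) = J at *
  generalize Real.exp (-|x| * Real.cos (Real.pi / 8)) *
            Real.cos (|x| * Real.sin (Real.pi / 8) - Real.pi / 8)
          + Real.exp (-|x| * Real.sin (Real.pi / 8)) *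
            Real.sin (|x| * Real.cos (Real.pi / 8) + Real.pi / 8) = R at *
  have hJ : J = ((Real.pi / 2 * R : ℝ) : ℂ) := by
    have hI := Complex.I_ne_zero
    push_cast at hG ⊢
    field_simp at hG ⊢
    linear_combination -hG / 4
  rw [hJ, Complex.ofReal_re] at hre
  linarith
end

section
/- Let ν = π/8. For every real x, ∫₀^∞ cos(xξ)/(1 + ξ⁸)² dξ = (7/8)·∫₀^∞ cos(xξ)/(1 + ξ⁸) dξ + (x/8)·∫₀^∞ ξ·sin(xξ)/(1 + ξ⁸) dξ; equivalently, the autocorrelation function L of K satisfies L(x) = (7/8)·K(x) − (x/8)·K'(x), where K(x) = (1/π)∫₀^∞ cos(xξ)/(1+ξ⁸) dξ and πL(x) = ∫₀^∞ cos(xξ)/(1+ξ⁸)² dξ. -/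
/-!
The function `ξ cos(xξ)/(1+ξ⁸)` vanishes at `0` and at `∞`, and since
`ξ⁸/(1+ξ⁸)² = 1/(1+ξ⁸) - 1/(1+ξ⁸)²` its derivative is
`8 cos(xξ)/(1+ξ⁸)² - 7 cos(xξ)/(1+ξ⁸) - x ξ sin(xξ)/(1+ξ⁸)`.
Integrating over `(0, ∞)` gives the identity between the integrals. The identity for `L` follows
by differentiating `K` under the integral sign (`hasDerivAt_Kint`). All integrands are dominated
by a multiple of `1/(1+ξ²)`, by `abs_le_bound` and `abs_mul_le_bound`.
-/

open Set

/-- The kernel `K(x) = (1/π)∫₀^∞ cos(xξ)/(1+ξ⁸) dξ`. -/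
noncomputable def Kint (x : ℝ) : ℝ :=
  (1 / Real.pi) * ∫ ξ in Ioi (0 : ℝ), Real.cos (x * ξ) / (1 + ξ ^ 8)

/-- The autocorrelation function `L(x) = (1/π)∫₀^∞ cos(xξ)/(1+ξ⁸)² dξ` of `K`. -/
noncomputable def Lint (x : ℝ) : ℝ :=
  (1 / Real.pi) * ∫ ξ in Ioi (0 : ℝ), Real.cos (x * ξ) / (1 + ξ ^ 8) ^ 2

open MeasureTheory Filter Topology

lemma one_add_pow_eight_pos (ξ : ℝ) : 0 < 1 + ξ ^ 8 := by positivity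

lemma abs_le_bound (ξ c : ℝ) (hc : |c| ≤ 1) : |c / (1 + ξ ^ 8)| ≤ 2 * (1 + ξ ^ 2)⁻¹ := by
  have h8 := one_add_pow_eight_pos ξ
  rw [abs_div, abs_of_pos h8, ← div_eq_mul_inv, div_le_div_iff₀ h8 (by positivity)]
  have : 1 + ξ ^ 2 ≤ 2 * (1 + ξ ^ 8) := by
    nlinarith [sq_nonneg (ξ ^ 4 - 1), sq_nonneg (ξ ^ 2 - 1), sq_nonneg (ξ ^ 4)]
  nlinarith [abs_nonneg c, sq_nonneg ξ]

lemma abs_mul_le_bound (ξ c : ℝ) (hc : |c| ≤ 1) :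
    |ξ * c / (1 + ξ ^ 8)| ≤ 2 * (1 + ξ ^ 2)⁻¹ := by
  have h8 := one_add_pow_eight_pos ξ
  rw [abs_div, abs_of_pos h8, ← div_eq_mul_inv, div_le_div_iff₀ h8 (by positivity), abs_mul]
  have h1 : |ξ| * (1 + ξ ^ 2) ≤ 2 * (1 + ξ ^ 8) := by
    have e2 : ξ ^ 2 = |ξ| ^ 2 := (sq_abs ξ).symm
    have e8 : ξ ^ 8 = |ξ| ^ 8 := by rw [← abs_pow]; exact (abs_of_nonneg (by positivity)).symm
    rw [e2, e8]
    have ht := abs_nonneg ξ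
    generalize |ξ| = t at ht
    rcases le_total t 1 with h | h
    · nlinarith [pow_le_one₀ (n := 2) ht h, pow_nonneg ht 8, pow_le_one₀ (n := 3) ht h]
    · nlinarith [pow_le_pow_right₀ h (show 1 ≤ 8 by norm_num),
        pow_le_pow_right₀ h (show 3 ≤ 8 by norm_num)]
  have h2 : |ξ| * |c| ≤ |ξ| := mul_le_of_le_one_right (abs_nonneg _) hc
  exact (mul_le_mul_of_nonneg_right h2 (by positivity)).trans h1

lemma integrable_bound : Integrable (fun ξ : ℝ => 2 * (1 + ξ ^ 2)⁻¹) :=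
  integrable_inv_one_add_sq.const_mul 2

lemma integrable_cos (x : ℝ) : Integrable (fun ξ : ℝ => Real.cos (x * ξ) / (1 + ξ ^ 8)) := by
  refine integrable_bound.mono' (Continuous.aestronglyMeasurable ?_)
    (Eventually.of_forall fun ξ => abs_le_bound ξ _ (Real.abs_cos_le_one _))
  exact Continuous.div (by fun_prop) (by fun_prop) fun ξ => (one_add_pow_eight_pos ξ).ne'

lemma integrable_mul_sin (x : ℝ) :
    Integrable (fun ξ : ℝ => ξ * Real.sin (x * ξ) / (1 + ξ ^ 8)) := by
  refine integrable_bound.mono' (Continuous.aestronglyMeasurable ?_)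
    (Eventually.of_forall fun ξ => abs_mul_le_bound ξ _ (Real.abs_sin_le_one _))
  exact Continuous.div (by fun_prop) (by fun_prop) fun ξ => (one_add_pow_eight_pos ξ).ne'

lemma integrable_cos_sq (x : ℝ) :
    Integrable (fun ξ : ℝ => Real.cos (x * ξ) / (1 + ξ ^ 8) ^ 2) := by
  refine integrable_bound.mono' (Continuous.aestronglyMeasurable ?_)
    (Eventually.of_forall fun ξ => ?_)
  · exact Continuous.div (by fun_prop) (by fun_prop)
      fun ξ => (pow_pos (one_add_pow_eight_pos ξ) 2).ne'
  · have h8 := one_add_pow_eight_pos ξ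
    rw [sq, ← div_div]
    rw [Real.norm_eq_abs]
    refine abs_le_bound ξ _ ?_
    rw [abs_div, abs_of_pos h8, div_le_one h8]
    have : 0 ≤ ξ ^ 8 := by positivity
    linarith [Real.abs_cos_le_one (x * ξ)]

lemma tendsto_bound : Tendsto (fun ξ : ℝ => 2 * (1 + ξ ^ 2)⁻¹) atTop (𝓝 0) := by
  have h : Tendsto (fun ξ : ℝ => 1 + ξ ^ 2) atTop atTop :=
    tendsto_atTop_add_const_left _ _ (tendsto_pow_atTop two_ne_zero)
  simpa using h.inv_tendsto_atTop.const_mul 2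

lemma integral_identity (x : ℝ) :
    (∫ ξ in Ioi (0 : ℝ), Real.cos (x * ξ) / (1 + ξ ^ 8) ^ 2) =
      (7 / 8) * (∫ ξ in Ioi (0 : ℝ), Real.cos (x * ξ) / (1 + ξ ^ 8))
        + (x / 8) * (∫ ξ in Ioi (0 : ℝ), ξ * Real.sin (x * ξ) / (1 + ξ ^ 8)) := by
  have iL := ((integrable_cos_sq x).integrableOn (s := Ioi 0)).const_mul 8
  have iK := ((integrable_cos x).integrableOn (s := Ioi 0)).const_mul 7
  have iS := ((integrable_mul_sin x).integrableOn (s := Ioi 0)).const_mul x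
  have hder : ∀ ξ ∈ Ici (0 : ℝ), HasDerivAt (fun ξ : ℝ => ξ * Real.cos (x * ξ) / (1 + ξ ^ 8))
      (8 * (Real.cos (x * ξ) / (1 + ξ ^ 8) ^ 2) - 7 * (Real.cos (x * ξ) / (1 + ξ ^ 8))
        - x * (ξ * Real.sin (x * ξ) / (1 + ξ ^ 8))) ξ := by
    intro ξ _
    have h8 := (one_add_pow_eight_pos ξ).ne'
    have hx : HasDerivAt (fun ξ : ℝ => x * ξ) x ξ := by
      simpa using (hasDerivAt_id ξ).const_mul x
    have h := ((hasDerivAt_id ξ).mul hx.cos).div ((hasDerivAt_pow 8 ξ).const_add 1) h8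
    refine h.congr_deriv ?_
    simp only [id, Pi.mul_apply]
    field_simp
    push_cast
    ring
  have hlim : Tendsto (fun ξ : ℝ => ξ * Real.cos (x * ξ) / (1 + ξ ^ 8)) atTop (𝓝 0) :=
    squeeze_zero_norm (fun ξ => abs_mul_le_bound ξ _ (Real.abs_cos_le_one _)) tendsto_bound
  have key := integral_Ioi_of_hasDerivAt_of_tendsto' hder ((iL.sub iK).sub iS) hlim
  rw [integral_sub (by exact iL.sub iK) iS, integral_sub iL iK, integral_const_mul, integral_const_mul,
    integral_const_mul] at key
  simp only [zero_mul, zero_div, sub_zero] at key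
  linarith

lemma hasDerivAt_Kint (x : ℝ) :
    HasDerivAt Kint
      ((1 / Real.pi) * ∫ ξ in Ioi (0 : ℝ), -(ξ * Real.sin (x * ξ) / (1 + ξ ^ 8))) x := by
  refine HasDerivAt.const_mul _ ?_
  refine (hasDerivAt_integral_of_dominated_loc_of_deriv_le (μ := volume.restrict (Ioi 0))
    (F := fun y ξ => Real.cos (y * ξ) / (1 + ξ ^ 8))
    (F' := fun y ξ => -(ξ * Real.sin (y * ξ) / (1 + ξ ^ 8)))
    (bound := fun ξ => 2 * (1 + ξ ^ 2)⁻¹) (s := univ) univ_mem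
    (Eventually.of_forall fun y => (integrable_cos y).integrableOn.aestronglyMeasurable)
    (integrable_cos x).integrableOn
    (integrable_mul_sin x).neg.integrableOn.aestronglyMeasurable
    (Eventually.of_forall fun ξ y _ => ?_) integrable_bound.integrableOn
    (Eventually.of_forall fun ξ y _ => ?_)).2
  · rw [norm_neg]
    exact abs_mul_le_bound ξ _ (Real.abs_sin_le_one _)
  · have hy : HasDerivAt (fun y : ℝ => y * ξ) ξ y := by
      simpa using (hasDerivAt_id y).mul_const ξ
    refine (hy.cos.div_const (1 + ξ ^ 8)).congr_deriv ?_
    ring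

/-- The identity `L = (7/8)K − (x/8)K'` for the autocorrelation of the kernel:
for every real `x`,
`∫₀^∞ cos(xξ)/(1+ξ⁸)² dξ = (7/8)∫₀^∞ cos(xξ)/(1+ξ⁸) dξ
  + (x/8)∫₀^∞ ξ sin(xξ)/(1+ξ⁸) dξ`, equivalently
`L(x) = (7/8)K(x) − (x/8)K'(x)`. -/
theorem stmt15 (x : ℝ) :
    (∫ ξ in Ioi (0 : ℝ), Real.cos (x * ξ) / (1 + ξ ^ 8) ^ 2) =
      (7 / 8) * (∫ ξ in Ioi (0 : ℝ), Real.cos (x * ξ) / (1 + ξ ^ 8))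
        + (x / 8) * (∫ ξ in Ioi (0 : ℝ), ξ * Real.sin (x * ξ) / (1 + ξ ^ 8)) ∧
    Lint x = (7 / 8) * Kint x - (x / 8) * deriv Kint x := by
  refine ⟨integral_identity x, ?_⟩
  rw [(hasDerivAt_Kint x).deriv, integral_neg, Lint, Kint, integral_identity x]
  ring
end

section
/- Let α, β : ℝ → ℝ be twice continuously differentiable with σ(s) := √(α'(s)² + β'(s)²) > 0 for all s, let γ : ℝ → ℝ satisfy γ'(s) = σ(s), and define the curvature κ(s) = (α'(s)β''(s) − α''(s)β'(s))/σ(s)³. Define X, Y : ℝ² → ℝ by X(s,w) = α(s) + (w − γ(s))·α'(s)/σ(s) and Y(s,w) = β(s) + (w − γ(s))·β'(s)/σ(s). Then the Jacobian matrix of (X,Y) with respect to (s,w) satisfies [[X_s, X_w],[Y_s, Y_w]] = [[−β'(s), α'(s)],[α'(s), β'(s)]] · [[κ(s)·(w − γ(s)), 0],[0, σ(s)^{-1}]]; in particular the Jacobian determinant equals X_s·Y_w − X_w·Y_s = −κ(s)·(w − γ(s))·σ(s). -/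
/-!
Write `a = α'`, `b = β'`, `σ = √(a² + b²)`. In `∂X/∂s` the term `α' = a` cancels against
`-γ' · a / σ = -a`, so only `(w - γ) · (a / σ)'` survives. From `σ σ' = a a' + b b'` one gets
`(a / σ)' = b (a' b - a b') / σ³ = -b κ`. The same computation with the roles of `a` and `b`
exchanged gives `∂Y/∂s` (`hasDerivAt_tangent_coord` covers both). The `w`-derivatives are those
of affine functions, and the determinant follows from `a² + b² = σ²`.
-/

/-- Derivative along the curve of one coordinate of the tangent-line map: `p` is that coordinate
of the curve, `a = p'`, and `b` is the derivative of the other coordinate. -/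
lemma hasDerivAt_tangent_coord {p a b γ : ℝ → ℝ} {a' b' s : ℝ} (w : ℝ)
    (hp : HasDerivAt p (a s) s) (ha : HasDerivAt a a' s) (hb : HasDerivAt b b' s)
    (hσ : 0 < √(a s ^ 2 + b s ^ 2)) (hγ : HasDerivAt γ (√(a s ^ 2 + b s ^ 2)) s) :
    HasDerivAt (fun t => p t + (w - γ t) * a t / √(a t ^ 2 + b t ^ 2))
      (b s * ((a' * b s - a s * b') / √(a s ^ 2 + b s ^ 2) ^ 3 * (w - γ s))) s := by
  have hpos : 0 < a s ^ 2 + b s ^ 2 := Real.sqrt_pos.mp hσ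
  have hroot : HasDerivAt (fun t => √(a t ^ 2 + b t ^ 2))
      ((2 * a s * a' + 2 * b s * b') / (2 * √(a s ^ 2 + b s ^ 2))) s := by
    have h : HasDerivAt (fun t => a t ^ 2 + b t ^ 2) (2 * a s * a' + 2 * b s * b') s := by
      simpa using (ha.fun_pow 2).fun_add (hb.fun_pow 2)
    exact h.sqrt hpos.ne'
  have hsq : √(a s ^ 2 + b s ^ 2) ^ 2 = a s ^ 2 + b s ^ 2 := Real.sq_sqrt hpos.le
  refine (hp.fun_add (((hγ.const_sub w).fun_mul ha).fun_div hroot hσ.ne')).congr_deriv ?_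
  generalize √(a s ^ 2 + b s ^ 2) = r at *
  have hr : r ≠ 0 := hσ.ne'
  field_simp
  linear_combination (w - γ s) * a' * hsq

/-- The tangent-line map is affine in `w`. -/
lemma hasDerivAt_tangent_coord_w (p c a r w : ℝ) :
    HasDerivAt (fun t : ℝ => p + (t - c) * a / r) (a / r) w := by
  simpa using ((((hasDerivAt_id w).sub_const c).mul_const a).div_const r).const_add p

/-- Jacobian of the tangent-line (caustic) coordinates: with `(α,β)` a regular
plane curve with speed `σ = √(α'²+β'²) > 0`, arc length `γ` (`γ' = σ`) and
curvature `κ = (α'β'' − α''β')/σ³`, the map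
`(s,w) ↦ (X,Y) = (α(s),β(s)) + (w − γ(s))·(α'(s),β'(s))/σ(s)` has Jacobian
matrix `[[−β', α'],[α', β']]·[[κ·(w−γ), 0],[0, σ⁻¹]]`; in particular its
determinant equals `−κ(s)·(w − γ(s))·σ(s)`. -/
theorem stmt19 (α β γ κ : ℝ → ℝ)
    (hα : ContDiff ℝ 2 α) (hβ : ContDiff ℝ 2 β)
    (hσ : ∀ s, 0 < Real.sqrt ((deriv α s) ^ 2 + (deriv β s) ^ 2))
    (hγ : ∀ s, HasDerivAt γ (Real.sqrt ((deriv α s) ^ 2 + (deriv β s) ^ 2)) s)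
    (hκ : ∀ s, κ s = (deriv α s * deriv (deriv β) s - deriv (deriv α) s * deriv β s) /
      (Real.sqrt ((deriv α s) ^ 2 + (deriv β s) ^ 2)) ^ 3)
    (X Y : ℝ → ℝ → ℝ)
    (hX : ∀ s w, X s w = α s
      + (w - γ s) * deriv α s / Real.sqrt ((deriv α s) ^ 2 + (deriv β s) ^ 2))
    (hY : ∀ s w, Y s w = β s
      + (w - γ s) * deriv β s / Real.sqrt ((deriv α s) ^ 2 + (deriv β s) ^ 2)) :
    ∀ s w : ℝ,
      deriv (fun s' => X s' w) s = -(deriv β s) * (κ s * (w - γ s)) ∧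
      deriv (fun w' => X s w') w
        = deriv α s / Real.sqrt ((deriv α s) ^ 2 + (deriv β s) ^ 2) ∧
      deriv (fun s' => Y s' w) s = deriv α s * (κ s * (w - γ s)) ∧
      deriv (fun w' => Y s w') w
        = deriv β s / Real.sqrt ((deriv α s) ^ 2 + (deriv β s) ^ 2) ∧
      deriv (fun s' => X s' w) s * deriv (fun w' => Y s w') w
          - deriv (fun w' => X s w') w * deriv (fun s' => Y s' w) s
        = -(κ s) * (w - γ s) * Real.sqrt ((deriv α s) ^ 2 + (deriv β s) ^ 2) := by
  intro s w
  have hα₁ : HasDerivAt α (deriv α s) s := (hα.differentiable two_ne_zero s).hasDerivAt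
  have hβ₁ : HasDerivAt β (deriv β s) s := (hβ.differentiable two_ne_zero s).hasDerivAt
  have hα₂ : HasDerivAt (deriv α) (deriv (deriv α) s) s :=
    (((contDiff_succ_iff_deriv (n := 1)).1 hα).2.2.differentiable one_ne_zero s).hasDerivAt
  have hβ₂ : HasDerivAt (deriv β) (deriv (deriv β) s) s :=
    (((contDiff_succ_iff_deriv (n := 1)).1 hβ).2.2.differentiable one_ne_zero s).hasDerivAt
  have hXs : deriv (fun s' => X s' w) s = -(deriv β s) * (κ s * (w - γ s)) := by
    simp only [hX]
    rw [(hasDerivAt_tangent_coord w hα₁ hα₂ hβ₂ (hσ s) (hγ s)).deriv, hκ]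
    ring
  have hYs : deriv (fun s' => Y s' w) s = deriv α s * (κ s * (w - γ s)) := by
    -- the lemma applies with the two coordinates exchanged, so the squares swap under the root
    have hσ' := hσ s
    have hγ' := hγ s
    rw [add_comm] at hσ' hγ'
    simp only [hY, hκ, add_comm (deriv α _ ^ 2)]
    rw [(hasDerivAt_tangent_coord w hβ₁ hβ₂ hα₂ hσ' hγ').deriv]
    ring
  have hXw : deriv (fun w' => X s w') w = deriv α s / √(deriv α s ^ 2 + deriv β s ^ 2) := by
    simp only [hX]
    exact (hasDerivAt_tangent_coord_w _ _ _ _ w).deriv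
  have hYw : deriv (fun w' => Y s w') w = deriv β s / √(deriv α s ^ 2 + deriv β s ^ 2) := by
    simp only [hY]
    exact (hasDerivAt_tangent_coord_w _ _ _ _ w).deriv
  refine ⟨hXs, hXw, hYs, hYw, ?_⟩
  rw [hXs, hXw, hYs, hYw]
  have hr : √(deriv α s ^ 2 + deriv β s ^ 2) ≠ 0 := (hσ s).ne'
  have hsq : √(deriv α s ^ 2 + deriv β s ^ 2) ^ 2 = deriv α s ^ 2 + deriv β s ^ 2 :=
    Real.sq_sqrt (by positivity)
  generalize √(deriv α s ^ 2 + deriv β s ^ 2) = r at hr hsq ⊢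
  field_simp
  linear_combination κ s * (w - γ s) * hsq
end
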